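/- A rulegraph R is simple if and only if every option preserving map α : R → S into any rulegraph S is injective. -/

import Mathlib

/-- The set of options (out-neighbors) of a vertex `p` in the digraph with arrow
relation `E`. -/
def OptSet {V : Type*} (E : V → V → Prop) (p : V) : Set V := {q | E p q}

/-- A digraph has no infinite directed walk (i.e. it is a rulegraph). -/
def NoInfiniteWalk {V : Type*} (E : V → V → Prop) : Prop :=
  ¬ ∃ f : ℕ → V, ∀ n, E (f n) (f (n + 1))

/-- A map `α` between digraphs is option preserving if `Opt (α p) = α '' Opt p`
for every vertex `p`. -/
def OptionPreserving {V W : Type*} (E : V → V → Prop) (F : W → W → Prop)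
    (α : V → W) : Prop :=
  ∀ p, OptSet F (α p) = α '' OptSet E p

/-- A source is a vertex with no in-neighbors. -/
def IsSource {V : Type*} (E : V → V → Prop) (s : V) : Prop := ∀ q, ¬ E q s

/-- A gamegraph is a rulegraph with a unique source `s` (the starting position)
such that every vertex is a subposition of `s`. -/
def IsGamegraph {V : Type*} (E : V → V → Prop) (s : V) : Prop :=
  NoInfiniteWalk E ∧ IsSource E s ∧ (∀ t, IsSource E t → t = s) ∧
    ∀ p, Relation.ReflTransGen E s p

/-- The equivalence class of `p` under the relation `r`. -/
def cls {V : Type*} (r : V → V → Prop) (p : V) : Set V := {x | r p x}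

/-- A congruence relation on a rulegraph: an equivalence relation such that
related vertices have the same set of classes of options. -/
def IsCongruence {V : Type*} (E : V → V → Prop) (r : V → V → Prop) : Prop :=
  Equivalence r ∧ ∀ p q, r p q → cls r '' OptSet E p = cls r '' OptSet E q

/-- A rulegraph is simple if its only congruence relation is equality. -/
def IsSimple {V : Type*} (E : V → V → Prop) : Prop :=
  ∀ r : V → V → Prop, IsCongruence E r → ∀ p q, r p q → p = q

/-- The arrow relation of the quotient digraph by a setoid `s`: there is an arrow
from `[p]` to `[q]` exactly when there are `p' ∼ p` and `q' ∼ q` with `q' ∈ Opt p'`. -/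
def QuotE {V : Type*} (E : V → V → Prop) (s : Setoid V) :
    Quotient s → Quotient s → Prop :=
  fun a b => ∃ p q : V, Quotient.mk s p = a ∧ Quotient.mk s q = b ∧ E p q

universe u

/-!
Congruence relations on a rulegraph are exactly the kernels of option preserving maps: the fibers
of an option preserving map form a congruence, and the quotient map by a congruence is option
preserving. The quotient is again a rulegraph because an option preserving map lifts arrows, so
well-foundedness passes from its domain to its image.
-/

theorem noInfiniteWalk_iff_wellFounded_flip {V : Type*} {E : V → V → Prop} :
    NoInfiniteWalk E ↔ WellFounded (flip E) := by
  rw [wellFounded_iff_isEmpty_descending_chain, isEmpty_subtype, NoInfiniteWalk, not_exists]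
  rfl

namespace OptionPreserving

variable {V W : Type*} {E : V → V → Prop} {F : W → W → Prop} {α : V → W}

theorem fibration_flip (hα : OptionPreserving E F α) :
    Relation.Fibration (flip E) (flip F) α :=
  fun p _ hw => (hα p).subset hw

theorem noInfiniteWalk_of_surjective (hα : OptionPreserving E F α)
    (hsurj : Function.Surjective α) (hE : NoInfiniteWalk E) : NoInfiniteWalk F := by
  rw [noInfiniteWalk_iff_wellFounded_flip] at hE ⊢
  exact ⟨hsurj.forall.2 fun p => (hE.apply p).of_fibration α hα.fibration_flip⟩

theorem isCongruence_ker (hα : OptionPreserving E F α) : IsCongruence E (Setoid.ker α) := by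
  refine ⟨(Setoid.ker α).iseqv, fun p q (hpq : α p = α q) => ?_⟩
  have cls_ker : cls (Setoid.ker α) = (fun w => {x | w = α x}) ∘ α := rfl
  rw [cls_ker, Set.image_comp, Set.image_comp, ← hα p, ← hα q, hpq]

end OptionPreserving

theorem IsSimple.injective_of_optionPreserving {V W : Type*} {E : V → V → Prop}
    {F : W → W → Prop} {α : V → W} (hE : IsSimple E) (hα : OptionPreserving E F α) :
    Function.Injective α :=
  fun p q hpq => hE (Setoid.ker α) hα.isCongruence_ker p q hpq

namespace IsCongruence

variable {V : Type*} {E : V → V → Prop}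

theorem exists_arrow_of_rel {r : V → V → Prop} (hr : IsCongruence E r) {p p' q' : V}
    (hp : r p p') (hE : E p' q') : ∃ q, E p q ∧ r q q' := by
  have hmem : cls r q' ∈ cls r '' OptSet E p := hr.2 p p' hp ▸ Set.mem_image_of_mem _ hE
  obtain ⟨q, hq, hcls⟩ := hmem
  have hqq' : q' ∈ cls r q := hcls ▸ hr.1.refl q'
  exact ⟨q, hq, hqq'⟩

theorem optionPreserving_mk {s : Setoid V} (hs : IsCongruence E s) :
    OptionPreserving E (QuotE E s) (Quotient.mk s) := by
  intro p
  ext b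
  constructor
  · rintro ⟨p', q', hp, rfl, hE⟩
    obtain ⟨q, hq, hqq'⟩ := hs.exists_arrow_of_rel (Quotient.exact hp.symm) hE
    exact ⟨q, hq, Quotient.sound hqq'⟩
  · rintro ⟨q, hq, rfl⟩
    exact ⟨p, q, rfl, rfl, hq⟩

end IsCongruence

/-- A rulegraph is simple iff every option preserving map out of it is
injective. -/
theorem stmt_14 {V : Type u} (E : V → V → Prop) (hR : NoInfiniteWalk E) :
    IsSimple E ↔
      ∀ (W : Type u) (F : W → W → Prop), NoInfiniteWalk F →
        ∀ α : V → W, OptionPreserving E F α → Function.Injective α := by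
  constructor
  · intro hE W F _ α hα
    exact hE.injective_of_optionPreserving hα
  · intro hinj r hr p q hpq
    let s : Setoid V := ⟨r, hr.1⟩
    have hmk : OptionPreserving E (QuotE E s) (Quotient.mk s) := hr.optionPreserving_mk
    have hquot : NoInfiniteWalk (QuotE E s) :=
      hmk.noInfiniteWalk_of_surjective Quotient.mk_surjective hR
    exact hinj _ _ hquot _ hmk (Quotient.sound hpq)
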